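/- Let a ∈ (0,1) be irrational and δ ∈ (0,1). Then there exists a constant C > 0 depending only on a and δ, and for every integer n ≥ 2 a polytope P_n ⊂ ℝ^n, such that log₂|ℱ(P_n)| ≤ C·n^{1−a}, log₂|V(P_n)| ≤ C·n^{a+δ(1−a)+C/√(log n)}, and (R(P_n)/r(P_n))² ≤ C·n^{1−δ+a}; consequently log₂|V(P_n)| · log₂|ℱ(P_n)| · (R(P_n)/r(P_n))² ≤ C³·n^{2+a(1−δ)+C/√(log n)}. (Theorem 1.3, part 2.) -/

import Mathlib

/-!
The polytope is built from `N` blocks of size `m × k`, whose entries are the coordinates of `ℝ ^ n`.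
Its facet normals are supported on a set `A` of blocks, with one entry `±1 / √|A|` in each row; its
vertices are supported on one row of each block, with entries `± (√(j + 1) - √j)` in the block of
rank `j`. A normal and a vertex pair to at most `1` because the weights `√(j + 1) - √j` decrease and
any `|A|` of them sum to at most `√|A|`. Conversely, maximising a linear form over the polar of the
normals is a greedy problem for the submodular bound `√|A|`, so a vertex attains the maximum.

There are `exp (O(N m log n))` normals, of norm at most `√m`, and `exp (O(N (k + log n)))` vertices,
whose squared norm is at most `k (1 + log N)`, a harmonic sum. Taking `N ≈ n ^ (δ (1 - a))`,
`m ≈ n ^ ((1 - δ) (1 - a)) / log n` and `k ≈ n ^ a log n`, the logarithms that remain are absorbed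
by `n ^ (a (1 - δ))` in the radii and by `n ^ (C / √(log n)) = exp (C √(log n))` in the vertex
count.
-/

open Finset Module
open scoped RealInnerProductSpace

namespace FLM

section Greedy

variable {R : Type*} [CommRing R] [LinearOrder R] [IsStrictOrderedRing R]

lemma mul_sum_le_sum_mul_of_antitone {N : ℕ} {d z : Fin N → R} {c : R} (hz : Antitone z)
    (hc : 0 ≤ c) (hcz : ∀ i, c ≤ z i)
    (hd : ∀ j (hj : j ≤ N), 0 ≤ ∑ i : Fin j, d (i.castLE hj)) :
    c * ∑ i, d i ≤ ∑ i, d i * z i := by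
  induction N generalizing c with
  | zero => simp
  | succ N ih =>
    have hinit : z (Fin.last N) * ∑ i : Fin N, d i.castSucc ≤
        ∑ i : Fin N, d i.castSucc * z i.castSucc :=
      ih (fun i j h => hz (Fin.castSucc_le_castSucc_iff.2 h)) (hc.trans (hcz _))
        (fun i => hz (Fin.le_last _)) fun j hj => hd j (hj.trans N.le_succ)
    calc c * ∑ i, d i ≤ z (Fin.last N) * ∑ i, d i :=
          mul_le_mul_of_nonneg_right (hcz _) (hd (N + 1) le_rfl)
      _ = z (Fin.last N) * ∑ i : Fin N, d i.castSucc + d (Fin.last N) * z (Fin.last N) := by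
          rw [Fin.sum_univ_castSucc, mul_add, mul_comm (d _)]
      _ ≤ ∑ i, d i * z i := by
          rw [Fin.sum_univ_castSucc]
          gcongr

/-- The permutation ranks the entries of `z` in decreasing order, and the inequality is Abel
summation against the partial sums of `w - u`. -/
lemma exists_perm_sum_mul_le {N : ℕ} {w : ℕ → R} {u z : Fin N → R} (hz : ∀ p, 0 ≤ z p)
    (hu : ∀ A : Finset (Fin N), ∑ p ∈ A, u p ≤ ∑ i ∈ range #A, w i) :
    ∃ σ : Equiv.Perm (Fin N), ∑ p, u p * z p ≤ ∑ p, w (σ p) * z p := by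
  set π := Tuple.sort fun p => -z p
  have hanti : Antitone fun i => z (π i) := fun i j h =>
    neg_le_neg_iff.1 (Tuple.monotone_sort (fun p => -z p) h)
  have hpartial (j : ℕ) (hj : j ≤ N) :
      0 ≤ ∑ i : Fin j, (w (i.castLE hj) - u (π (i.castLE hj))) := by
    have hprefix := hu (univ.map ((Fin.castLEEmb hj).trans π.toEmbedding))
    rw [card_map, card_univ, Fintype.card_fin, sum_map, sum_range] at hprefix
    rw [sum_sub_distrib]
    exact sub_nonneg.2 hprefix
  have habel := mul_sum_le_sum_mul_of_antitone (d := fun i => w i - u (π i)) hanti le_rfl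
    (fun _ => hz _) hpartial
  simp only [zero_mul, sub_mul, sum_sub_distrib, sub_nonneg] at habel
  refine ⟨π.symm, ?_⟩
  rw [← Equiv.sum_comp π, ← Equiv.sum_comp π fun p => w (π.symm p) * z p]
  simpa only [Equiv.symm_apply_apply] using habel

end Greedy

section SqrtIncrement

lemma sum_le_sum_range_card_of_antitone {M : Type*} [AddCommMonoid M] [PartialOrder M]
    [IsOrderedAddMonoid M] {f : ℕ → M} (hf : Antitone f) (s : Finset ℕ) :
    ∑ i ∈ s, f i ≤ ∑ i ∈ range #s, f i := by
  induction s using Finset.induction_on_max with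
  | empty => simp
  | insert a s ha ih =>
    have has : a ∉ s := fun h => lt_irrefl _ (ha a h)
    have hcard : #s ≤ a := by
      simpa using card_le_card (fun x hx => mem_range.2 (ha x hx) : s ⊆ range a)
    rw [sum_insert has, card_insert_of_notMem has, sum_range_succ, add_comm]
    exact add_le_add ih (hf hcard)

/-- The increments of the square root: the weights whose `j` largest values sum to `√j`. They are
the coordinates of the vertices of the polytope, up to order and sign. -/
noncomputable def sqrtIncrement (j : ℕ) : ℝ := √(j + 1) - √j

lemma sqrtIncrement_eq_inv (j : ℕ) : sqrtIncrement j = (√(j + 1) + √j)⁻¹ := by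
  refine eq_inv_of_mul_eq_one_left ?_
  rw [sqrtIncrement, mul_comm, ← sq_sub_sq, Real.sq_sqrt (by positivity),
    Real.sq_sqrt (by positivity), add_sub_cancel_left]

lemma sqrtIncrement_nonneg (j : ℕ) : 0 ≤ sqrtIncrement j := by
  rw [sqrtIncrement_eq_inv]
  positivity

lemma antitone_sqrtIncrement : Antitone sqrtIncrement := fun i j h => by
  rw [sqrtIncrement_eq_inv, sqrtIncrement_eq_inv]
  gcongr

lemma sqrtIncrement_sq_le (j : ℕ) : sqrtIncrement j ^ 2 ≤ ((j : ℝ) + 1)⁻¹ := by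
  rw [sqrtIncrement_eq_inv, inv_pow]
  gcongr
  calc (j : ℝ) + 1 = √(j + 1) ^ 2 := (Real.sq_sqrt (by positivity)).symm
    _ ≤ (√(j + 1) + √j) ^ 2 := by gcongr; simp

lemma sum_range_sqrtIncrement (j : ℕ) : ∑ i ∈ range j, sqrtIncrement i = √j := by
  simpa [sqrtIncrement] using sum_range_sub (fun i : ℕ => √(i : ℝ)) j

lemma sum_range_sqrtIncrement_sq_le (N : ℕ) :
    ∑ i ∈ range N, sqrtIncrement i ^ 2 ≤ 1 + Real.log N :=
  calc ∑ i ∈ range N, sqrtIncrement i ^ 2 ≤ ∑ i ∈ range N, ((i : ℝ) + 1)⁻¹ :=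
        sum_le_sum fun i _ => sqrtIncrement_sq_le i
    _ = harmonic N := by simp [harmonic]
    _ ≤ 1 + Real.log N := harmonic_le_one_add_log N

lemma sum_sqrtIncrement_le {α : Type*} (f : α ↪ ℕ) (A : Finset α) :
    ∑ p ∈ A, sqrtIncrement (f p) ≤ √(#A) := by
  simpa [sum_range_sqrtIncrement] using
    sum_le_sum_range_card_of_antitone antitone_sqrtIncrement (A.map f)

end SqrtIncrement

section Facets

lemma exists_forall_lt_of_convexOn {E ι : Type*} [AddCommGroup E] [Module ℝ E] {G : Set E}
    (hne : G.Nonempty) {T : Finset ι} {f : ι → E → ℝ} {c : ι → ℝ}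
    (hf : ∀ t ∈ T, ConvexOn ℝ G (f t)) (hle : ∀ t ∈ T, ∀ x ∈ G, f t x ≤ c t)
    (hlt : ∀ t ∈ T, ∃ x ∈ G, f t x < c t) : ∃ x ∈ G, ∀ t ∈ T, f t x < c t := by
  classical
  induction T using Finset.induction_on with
  | empty => exact hne.imp fun x hx => ⟨hx, by simp⟩
  | insert s T _ ih =>
    simp only [forall_mem_insert] at hf hle hlt ⊢
    obtain ⟨x, hx, hxT⟩ := ih hf.2 hle.2 hlt.2
    obtain ⟨y, hy, hys⟩ := hlt.1
    have hhalf : (0 : ℝ) ≤ 1 / 2 := by norm_num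
    have hmid {g : E → ℝ} (hg : ConvexOn ℝ G g) :
        g ((1 / 2 : ℝ) • x + (1 / 2 : ℝ) • y) ≤ 1 / 2 * g x + 1 / 2 * g y :=
      hg.2 hx hy hhalf hhalf (add_halves 1)
    refine ⟨_, hf.1.1 hx hy hhalf hhalf (add_halves 1), ?_, fun t ht => ?_⟩
    · linarith [hmid hf.1, hle.1 x hx]
    · linarith [hmid (hf.2 t ht), hxT t ht, hle.2 t ht y hy]

section Normed

variable {E : Type*} [NormedAddCommGroup E] [NormedSpace ℝ E] {P G : Set E}

lemma eq_of_isExposed_of_mem_interior (hG : IsExposed ℝ P G) {x : E} (hxG : x ∈ G)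
    (hx : x ∈ interior P) : G = P := by
  obtain ⟨l, rfl⟩ := hG ⟨x, hxG⟩
  have hmax : IsLocalMax l x := by
    filter_upwards [mem_interior_iff_mem_nhds.1 hx] with y hy using hxG.2 y hy
  have hl : l = 0 := hmax.hasFDerivAt_eq_zero l.hasFDerivAt
  simp [hl]

lemma inter_affineSpan_eq_of_isExposed (hG : IsExposed ℝ P G) : P ∩ affineSpan ℝ G = G := by
  rcases G.eq_empty_or_nonempty with rfl | hne
  · simp
  refine Set.Subset.antisymm ?_ fun x hx => ⟨hG.subset hx, subset_affineSpan ℝ G hx⟩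
  rintro x ⟨hxP, hx⟩
  obtain ⟨g, hg⟩ := hne
  obtain ⟨l, rfl⟩ := hG ⟨g, hg⟩
  have hconst : Set.EqOn l.toLinearMap.toAffineMap (AffineMap.const ℝ E (l g))
      (affineSpan ℝ {x ∈ P | ∀ y ∈ P, l y ≤ l x}) :=
    AffineMap.eqOn_affineSpan fun y hy => (hg.2 y hy.1).antisymm (hy.2 g hg.1)
  have hlx : l x = l g := hconst hx
  exact ⟨hxP, fun y hy => hlx ▸ hg.2 y hy⟩

/-- The exposed faces of codimension one. In dimension at most one the subtraction makes the empty
face qualify. -/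
def facets (P : Set E) : Set (Set E) :=
  {G | IsExposed ℝ P G ∧ finrank ℝ (affineSpan ℝ G).direction = finrank ℝ E - 1}

lemma nonempty_of_mem_facets (hE : 1 < finrank ℝ E) (hG : G ∈ facets P) : G.Nonempty := by
  by_contra! h
  have hdim := hG.2
  rw [h, AffineSubspace.span_empty, AffineSubspace.direction_bot, finrank_bot] at hdim
  lia

lemma disjoint_interior_of_mem_facets (hE : 1 < finrank ℝ E) (hG : G ∈ facets P) :
    Disjoint G (interior P) := by
  refine Set.disjoint_left.2 fun x hxG hx => ?_
  obtain ⟨hexp, hdim⟩ := hG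
  obtain rfl := eq_of_isExposed_of_mem_interior hexp hxG hx
  have htop : affineSpan ℝ G = ⊤ := top_unique <|
    (isOpen_interior.affineSpan_eq_top ⟨x, hx⟩).ge.trans (affineSpan_mono ℝ interior_subset)
  rw [htop, AffineSubspace.direction_top, finrank_top] at hdim
  lia

end Normed

section Polar

variable {E : Type*} [NormedAddCommGroup E] [InnerProductSpace ℝ E]

/-- The polar `{x | ∀ t ∈ T, ⟪t, x⟫ ≤ 1}` of `T`, in the one-sided convention of convex geometry
(`LinearMap.polar` bounds the absolute value). -/
def oneSidedPolar (T : Set E) : Set E := {x | ∀ t ∈ T, ⟪t, x⟫ ≤ 1}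

lemma convex_oneSidedPolar (T : Set E) : Convex ℝ (oneSidedPolar T) := by
  simp only [oneSidedPolar, Set.ofPred_forall]
  exact convex_iInter₂ fun t _ => convex_halfSpace_le (innerₛₗ ℝ t).isLinear 1

lemma closedBall_subset_oneSidedPolar {T : Set E} {ρ : ℝ} (hρ : 0 < ρ) (hT : ∀ t ∈ T, ‖t‖ ≤ ρ) :
    Metric.closedBall 0 ρ⁻¹ ⊆ oneSidedPolar T := fun x hx t ht =>
  calc ⟪t, x⟫ ≤ ‖t‖ * ‖x‖ := real_inner_le_norm t x
    _ ≤ ρ * ρ⁻¹ := by gcongr; exacts [hT t ht, mem_closedBall_zero_iff.1 hx]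
    _ = 1 := mul_inv_cancel₀ hρ.ne'

/-- A compact convex set is determined by its support function. -/
lemma convexHull_eq_oneSidedPolar [CompleteSpace E] {S : Finset E} {T : Set E}
    (hST : ∀ s ∈ S, ∀ t ∈ T, ⟪t, s⟫ ≤ 1)
    (hdual : ∀ x ∈ oneSidedPolar T, ∀ y, ∃ s ∈ S, ⟪y, x⟫ ≤ ⟪y, s⟫) :
    convexHull ℝ (S : Set E) = oneSidedPolar T := by
  refine Set.Subset.antisymm (convexHull_min hST (convex_oneSidedPolar T)) fun x hx => ?_
  by_contra hxS
  have hclosed : IsClosed (convexHull ℝ (S : Set E)) :=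
    (S.finite_toSet.isCompact_convexHull (𝕜 := ℝ)).isClosed
  obtain ⟨f, u, hfu, hux⟩ := geometric_hahn_banach_closed_point (convex_convexHull ℝ _) hclosed hxS
  obtain ⟨s, hs, hle⟩ := hdual x hx ((InnerProductSpace.toDual ℝ E).symm f)
  simp only [InnerProductSpace.toDual_symm_apply] at hle
  exact (hle.trans_lt (hfu s (subset_convexHull ℝ _ hs))).not_gt hux

lemma setOf_forall_inner_lt_subset_interior_oneSidedPolar (T : Finset E) :
    {x | ∀ t ∈ T, ⟪t, x⟫ < 1} ⊆ interior (oneSidedPolar (T : Set E)) := by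
  refine interior_maximal (fun x hx t ht => (hx t ht).le) ?_
  simp only [Set.ofPred_forall]
  exact isOpen_biInter_finset fun t _ => isOpen_lt (by fun_prop) continuous_const

lemma exists_forall_inner_eq_one_of_mem_facets (hE : 1 < finrank ℝ E) {T : Finset E} {G : Set E}
    (hG : G ∈ facets (oneSidedPolar (T : Set E))) : ∃ t ∈ T, ∀ x ∈ G, ⟪t, x⟫ = 1 := by
  have hGP := hG.1.subset
  by_contra! hcon
  obtain ⟨x, hxG, hx⟩ := exists_forall_lt_of_convexOn (nonempty_of_mem_facets hE hG)
    (T := T) (f := fun t x => ⟪t, x⟫) (c := fun _ => 1)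
    (fun t _ => (innerₛₗ ℝ t).convexOn (hG.1.convex (convex_oneSidedPolar _)))
    (fun t ht x hx => hGP hx t ht)
    fun t ht => (hcon t ht).imp fun x hx => ⟨hx.1, (hGP hx.1 t ht).lt_of_ne hx.2⟩
  exact Set.disjoint_left.1 (disjoint_interior_of_mem_facets hE hG) hxG
    (setOf_forall_inner_lt_subset_interior_oneSidedPolar T hx)

lemma ncard_extremePoints_convexHull_le (S : Finset E) :
    ((convexHull ℝ (S : Set E)).extremePoints ℝ).ncard ≤ #S :=
  (Set.ncard_le_ncard extremePoints_convexHull_subset S.finite_toSet).trans_eq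
    (Set.ncard_coe_finset S)

lemma direction_eq_orthogonal_of_finrank [FiniteDimensional ℝ E] {G : Set E} {t : E} (ht : t ≠ 0)
    {c : ℝ} (hG : ∀ x ∈ G, ⟪t, x⟫ = c)
    (hdim : finrank ℝ (affineSpan ℝ G).direction = finrank ℝ E - 1) :
    (affineSpan ℝ G).direction = (ℝ ∙ t)ᗮ := by
  refine Submodule.eq_of_le_of_finrank_eq ?_ ?_
  · rw [direction_affineSpan, vectorSpan_def, Submodule.span_le]
    rintro _ ⟨x, hx, y, hy, rfl⟩
    simp [Submodule.mem_orthogonal_singleton_iff_inner_right, inner_sub_right, hG x hx, hG y hy]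
  · have := Submodule.finrank_add_finrank_orthogonal (ℝ ∙ t)
    rw [finrank_span_singleton ht] at this
    lia

lemma exists_eq_sep_of_mem_facets_oneSidedPolar (hE : 1 < finrank ℝ E) {T : Finset E} {G : Set E}
    (hG : G ∈ facets (oneSidedPolar (T : Set E))) :
    ∃ t ∈ T, G = {x ∈ oneSidedPolar (T : Set E) | ⟪t, x⟫ = 1} := by
  have : FiniteDimensional ℝ E := .of_finrank_pos (zero_lt_one.trans hE)
  obtain ⟨t, ht, htG⟩ := exists_forall_inner_eq_one_of_mem_facets hE hG
  obtain ⟨g, hg⟩ := nonempty_of_mem_facets hE hG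
  have ht0 : t ≠ 0 := by
    rintro rfl
    simpa using htG g hg
  refine ⟨t, ht, Set.Subset.antisymm (fun x hx => ⟨hG.1.subset hx, htG x hx⟩) ?_⟩
  rintro x ⟨hxP, hx⟩
  rw [← inter_affineSpan_eq_of_isExposed hG.1]
  refine ⟨hxP, ?_⟩
  rw [SetLike.mem_coe, ← AffineSubspace.vsub_right_mem_direction_iff_mem (mem_affineSpan ℝ hg),
    direction_eq_orthogonal_of_finrank ht0 htG hG.2,
    Submodule.mem_orthogonal_singleton_iff_inner_right]
  simp [inner_sub_right, hx, htG g hg]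

lemma facets_oneSidedPolar_subset_image (hE : 1 < finrank ℝ E) (T : Finset E) :
    facets (oneSidedPolar (T : Set E)) ⊆
      (fun t => {x ∈ oneSidedPolar (T : Set E) | ⟪t, x⟫ = 1}) '' T := fun _ hG =>
  (exists_eq_sep_of_mem_facets_oneSidedPolar hE hG).imp fun _ h => ⟨h.1, h.2.symm⟩

lemma finite_facets_oneSidedPolar (hE : 1 < finrank ℝ E) (T : Finset E) :
    (facets (oneSidedPolar (T : Set E))).Finite :=
  (T.finite_toSet.image _).subset (facets_oneSidedPolar_subset_image hE T)

lemma ncard_facets_oneSidedPolar_le (hE : 1 < finrank ℝ E) (T : Finset E) :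
    (facets (oneSidedPolar (T : Set E))).ncard ≤ #T :=
  calc (facets (oneSidedPolar (T : Set E))).ncard ≤ _ :=
        Set.ncard_le_ncard (facets_oneSidedPolar_subset_image hE T) (T.finite_toSet.image _)
    _ ≤ (T : Set E).ncard := Set.ncard_image_le T.finite_toSet
    _ = #T := Set.ncard_coe_finset T

end Polar

end Facets

section BlockArrays

variable {α β κ : Type*}

open Classical in
/-- The outer normal of a facet, as an array of blocks indexed by `α` whose rows are indexed by `β`
and columns by `κ`: one entry `±1 / √|A|` in every row of every block of `A`. The sign `0` is
allowed as well, so that `SignType.sign` can be used for `ε`. -/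
noncomputable def facetArray (A : Finset α) (col : α → β → κ) (ε : α → β → SignType) :
    α × β × κ → ℝ
  | (p, q, j) => if p ∈ A ∧ j = col p q then (√(#A))⁻¹ * ε p q else 0

open Classical in
/-- A vertex of the polytope, as an array of blocks: in block `p` only the row `row p` is nonzero,
with entries `±v p`. The sign `0` is allowed as in `facetArray`. -/
noncomputable def vertexArray (v : α → ℝ) (row : α → β) (ε : α → κ → SignType) : α × β × κ → ℝ
  | (p, q, j) => if q = row p then v p * ε p j else 0

lemma abs_coe_signType_le_one (s : SignType) : |(s : ℝ)| ≤ 1 := by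
  cases s <;> simp

lemma mul_coe_signType_le_abs (s : SignType) (t : ℝ) : s * t ≤ |t| :=
  calc (s : ℝ) * t ≤ |(s : ℝ)| * |t| := (le_abs_self _).trans_eq (abs_mul _ _)
    _ ≤ |t| := mul_le_of_le_one_left (abs_nonneg t) (abs_coe_signType_le_one s)

lemma inv_sqrt_card_mul_sum_le_one {A : Finset α} {v : α → ℝ} (hv : ∑ p ∈ A, v p ≤ √(#A)) :
    (√(#A))⁻¹ * ∑ p ∈ A, v p ≤ 1 :=
  (mul_le_mul_of_nonneg_left hv (by positivity)).trans inv_mul_le_one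

lemma abs_facetArray_le (A : Finset α) (col : α → β → κ) (ε : α → β → SignType) (p : α) (q : β)
    (j : κ) : |facetArray A col ε (p, q, j)| ≤ (√(#A))⁻¹ := by
  simp only [facetArray]
  split_ifs
  · rw [abs_mul, abs_of_nonneg (by positivity)]
    exact mul_le_of_le_one_right (by positivity) (abs_coe_signType_le_one _)
  · simp

lemma abs_vertexArray_le {v : α → ℝ} (hv : ∀ p, 0 ≤ v p) (row : α → β) (ε : α → κ → SignType)
    (p : α) (q : β) (j : κ) : |vertexArray v row ε (p, q, j)| ≤ v p := by
  simp only [vertexArray]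
  split_ifs
  · rw [abs_mul, abs_of_nonneg (hv p)]
    exact mul_le_of_le_one_right (hv p) (abs_coe_signType_le_one _)
  · simpa using hv p

lemma vertexArray_of_ne {v : α → ℝ} {row : α → β} {ε : α → κ → SignType} {p : α} {q : β}
    (hq : q ≠ row p) (j : κ) : vertexArray v row ε (p, q, j) = 0 := if_neg hq

variable [Fintype α] [Fintype β] [Fintype κ]

lemma sum_facetArray_mul (A : Finset α) (col : α → β → κ) (ε : α → β → SignType)
    (x : α × β × κ → ℝ) :
    ∑ c, facetArray A col ε c * x c =
      (√(#A))⁻¹ * ∑ p ∈ A, ∑ q, ε p q * x (p, q, col p q) := by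
  classical
  simp only [facetArray, Fintype.sum_prod_type, ite_and, ite_mul, zero_mul, mul_assoc]
  simp [mul_sum, sum_ite_irrel]

lemma sum_vertexArray_mul (v : α → ℝ) (row : α → β) (ε : α → κ → SignType)
    (y : α × β × κ → ℝ) :
    ∑ c, vertexArray v row ε c * y c = ∑ p, v p * ∑ j, ε p j * y (p, row p, j) := by
  classical
  simp only [vertexArray, Fintype.sum_prod_type, ite_mul, zero_mul, mul_assoc]
  simp [mul_sum, sum_ite_irrel]

lemma sum_facetArray_mul_le_one {v : α → ℝ} {A : Finset α} (hv : ∑ p ∈ A, v p ≤ √(#A))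
    {row : α → β} {y : α × β × κ → ℝ} (hy : ∀ p j, |y (p, row p, j)| ≤ v p)
    (hy₀ : ∀ p q j, q ≠ row p → y (p, q, j) = 0) (col : α → β → κ) (ε : α → β → SignType) :
    ∑ c, facetArray A col ε c * y c ≤ 1 := by
  rw [sum_facetArray_mul]
  refine le_trans ?_ (inv_sqrt_card_mul_sum_le_one hv)
  gcongr with p
  rw [Fintype.sum_eq_single (row p) fun q hq => by rw [hy₀ p q _ hq, mul_zero]]
  exact (mul_coe_signType_le_abs _ _).trans (hy p _)

lemma sum_facetArray_sq_le (A : Finset α) (col : α → β → κ) (ε : α → β → SignType) :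
    ∑ c, facetArray A col ε c ^ 2 ≤ Fintype.card β := by
  have hterm (p : α) (q : β) : ε p q * facetArray A col ε (p, q, col p q) ≤ (√(#A))⁻¹ :=
    (mul_coe_signType_le_abs _ _).trans (abs_facetArray_le A col ε p q _)
  simp only [sq, sum_facetArray_mul]
  calc (√(#A))⁻¹ * ∑ p ∈ A, ∑ q, ε p q * facetArray A col ε (p, q, col p q)
      ≤ (√(#A))⁻¹ * ∑ _p ∈ A, ∑ _q : β, (√(#A))⁻¹ := by
        gcongr with p _ q
        exact hterm p q
    _ = ((√(#A))⁻¹ * (#A / √(#A))) * Fintype.card β := by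
        simp only [sum_const, nsmul_eq_mul, card_univ]
        ring
    _ ≤ Fintype.card β := by
        rw [Real.div_sqrt]
        exact mul_le_of_le_one_left (Nat.cast_nonneg _) inv_mul_le_one

lemma sum_vertexArray_sq_le {v : α → ℝ} (hv : ∀ p, 0 ≤ v p) (row : α → β) (ε : α → κ → SignType) :
    ∑ c, vertexArray v row ε c ^ 2 ≤ Fintype.card κ * ∑ p, v p ^ 2 := by
  simp only [sq, sum_vertexArray_mul]
  rw [mul_sum]
  refine sum_le_sum fun p _ => ?_
  calc v p * ∑ j, ε p j * vertexArray v row ε (p, row p, j) ≤ v p * ∑ _j : κ, v p := by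
        gcongr with j
        · exact hv p
        · exact (mul_coe_signType_le_abs _ _).trans (abs_vertexArray_le hv row ε p _ j)
    _ = Fintype.card κ * (v p * v p) := by simp [mul_left_comm]

lemma sum_mul_le_sum_sum_mul [Nonempty κ] {x y : α × β × κ → ℝ} {M : α → β → ℝ} {z : α → ℝ}
    (hM : ∀ p q j, |x (p, q, j)| ≤ M p q) (hz : ∀ p q, ∑ j, |y (p, q, j)| ≤ z p) :
    ∑ c, x c * y c ≤ ∑ p, (∑ q, M p q) * z p := by
  simp only [Fintype.sum_prod_type, sum_mul]
  refine sum_le_sum fun p _ => sum_le_sum fun q _ => ?_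
  have hMpq : 0 ≤ M p q := (abs_nonneg _).trans (hM p q (Classical.arbitrary κ))
  calc ∑ j, x (p, q, j) * y (p, q, j) ≤ ∑ j, M p q * |y (p, q, j)| := by
        refine sum_le_sum fun j _ => ?_
        calc x (p, q, j) * y (p, q, j) ≤ |x (p, q, j)| * |y (p, q, j)| :=
              (le_abs_self _).trans_eq (abs_mul _ _)
          _ ≤ M p q * |y (p, q, j)| := by gcongr; exact hM p q j
    _ ≤ M p q * z p := by
        rw [← mul_sum]
        gcongr
        exact hz p q

lemma sum_abs_le_sqrt_card_of_sum_facetArray_mul_le_one {x : α × β × κ → ℝ}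
    (hx : ∀ A col ε, ∑ c, facetArray A col ε c * x c ≤ 1) (col : α → β → κ) (A : Finset α) :
    ∑ p ∈ A, ∑ q, |x (p, q, col p q)| ≤ √(#A) := by
  rcases A.eq_empty_or_nonempty with rfl | hA
  · simp
  have hpos : 0 < √(#A : ℝ) := Real.sqrt_pos.2 (mod_cast hA.card_pos)
  have h := hx A col fun p q => SignType.sign (x (p, q, col p q))
  simpa only [sum_facetArray_mul, sign_mul_self, inv_mul_le_iff₀ hpos, mul_one] using h

/-- The support function of the polar of the facet arrays is attained greedily: in each block take
the row of `y` with the largest `ℓ¹` norm, then hand the weights out in decreasing order of these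
norms. -/
lemma exists_sum_mul_le_sum_vertexArray_mul [Nonempty β] [Nonempty κ] {N : ℕ}
    {x : Fin N × β × κ → ℝ} (hx : ∀ A col ε, ∑ c, facetArray A col ε c * x c ≤ 1)
    (y : Fin N × β × κ → ℝ) :
    ∃ (σ : Equiv.Perm (Fin N)) (row : Fin N → β) (ε : Fin N → κ → SignType),
      ∑ c, x c * y c ≤ ∑ c, vertexArray (fun p => sqrtIncrement (σ p)) row ε c * y c := by
  choose col hcol using fun p q => Finite.exists_max fun j => |x (p, q, j)|
  choose row hrow using fun p => Finite.exists_max fun q => ∑ j, |y (p, q, j)|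
  obtain ⟨σ, hσ⟩ := exists_perm_sum_mul_le (w := sqrtIncrement)
    (u := fun p => ∑ q, |x (p, q, col p q)|) (z := fun p => ∑ j, |y (p, row p, j)|)
    (fun p => by positivity) fun A => by
      rw [sum_range_sqrtIncrement]
      exact sum_abs_le_sqrt_card_of_sum_facetArray_mul_le_one hx col A
  refine ⟨σ, row, fun p j => SignType.sign (y (p, row p, j)), ?_⟩
  calc ∑ c, x c * y c ≤ ∑ p, (∑ q, |x (p, q, col p q)|) * ∑ j, |y (p, row p, j)| :=
        sum_mul_le_sum_sum_mul hcol hrow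
    _ ≤ ∑ p, sqrtIncrement (σ p) * ∑ j, |y (p, row p, j)| := hσ
    _ = _ := by simp only [sum_vertexArray_mul, sign_mul_self]

end BlockArrays

section Restriction

variable {ι γ : Type*}

/-- The vector of `ℝ^ι` obtained by keeping only the coordinates in the range of `e`. Dimensions
that are not of the form `N * m * k` are reached by discarding some entries of the arrays. -/
noncomputable def restrict (e : ι ↪ γ) (f : γ → ℝ) : EuclideanSpace ℝ ι := WithLp.toLp 2 (f ∘ e)

lemma restrict_extend (e : ι ↪ γ) (x : EuclideanSpace ℝ ι) :
    restrict e (Function.extend e x 0) = x := by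
  ext i
  exact e.injective.extend_apply _ _ _

lemma abs_extend_restrict_le (e : ι ↪ γ) (f : γ → ℝ) (c : γ) :
    |Function.extend e (restrict e f) 0 c| ≤ |f c| := by
  by_cases hc : ∃ i, e i = c
  · obtain ⟨i, rfl⟩ := hc
    exact (congrArg _ (e.injective.extend_apply _ _ _)).le
  · simp [Function.extend_apply' _ _ _ hc]

variable [Fintype ι] [Fintype γ]

lemma inner_restrict (e : ι ↪ γ) (f : γ → ℝ) (x : EuclideanSpace ℝ ι) :
    ⟪restrict e f, x⟫ = ∑ c, f c * Function.extend e x 0 c := by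
  rw [PiLp.inner_apply]
  refine Fintype.sum_of_injective e e.injective _ _ (fun c hc => ?_) fun i => ?_
  · rw [Function.extend_apply' _ _ _ hc, Pi.zero_apply, mul_zero]
  · simp [restrict, e.injective.extend_apply, mul_comm]

lemma norm_restrict_le (e : ι ↪ γ) (f : γ → ℝ) {B : ℝ} (hf : ∑ c, f c ^ 2 ≤ B) :
    ‖restrict e f‖ ≤ √B := by
  refine Real.le_sqrt_of_sq_le ?_
  calc ‖restrict e f‖ ^ 2 = ∑ c ∈ univ.map e, f c ^ 2 := by
        simp [EuclideanSpace.real_norm_sq_eq, restrict]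
    _ ≤ ∑ c, f c ^ 2 := sum_le_univ_sum_of_nonneg fun c => sq_nonneg _
    _ ≤ B := hf

end Restriction

section BlockPolytope

open Classical in
/-- The facet normals of the block polytope with `N` blocks of size `m × k`. -/
noncomputable def blockNormals {ι : Type*} [Fintype ι] {N m k : ℕ}
    (e : ι ↪ Fin N × Fin m × Fin k) : Finset (EuclideanSpace ℝ ι) :=
  univ.image fun c : Finset (Fin N) × (Fin N → Fin m → Fin k) × (Fin N → Fin m → SignType) =>
    restrict e (facetArray c.1 c.2.1 c.2.2)

open Classical in
/-- The points spanning the block polytope with `N` blocks of size `m × k`. -/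
noncomputable def blockVertices {ι : Type*} [Fintype ι] {N m k : ℕ}
    (e : ι ↪ Fin N × Fin m × Fin k) : Finset (EuclideanSpace ℝ ι) :=
  univ.image fun c : Equiv.Perm (Fin N) × (Fin N → Fin m) × (Fin N → Fin k → SignType) =>
    restrict e (vertexArray (fun p => sqrtIncrement (c.1 p)) c.2.1 c.2.2)

variable {ι : Type*} [Fintype ι] {N m k : ℕ} (e : ι ↪ Fin N × Fin m × Fin k)

lemma card_blockNormals_le : #(blockNormals e) ≤ 2 ^ N * ((k ^ m) ^ N * (3 ^ m) ^ N) :=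
  card_image_le.trans_eq <| by
    simp only [card_univ, Fintype.card_prod, Fintype.card_finset, Fintype.card_pi_const,
      Fintype.card_fin, (by decide : Fintype.card SignType = 3)]

lemma card_blockVertices_le : #(blockVertices e) ≤ N.factorial * (m ^ N * (3 ^ k) ^ N) :=
  card_image_le.trans_eq <| by
    simp only [card_univ, Fintype.card_prod, Fintype.card_perm, Fintype.card_pi_const,
      Fintype.card_fin, (by decide : Fintype.card SignType = 3)]

lemma norm_le_of_mem_blockNormals {t : EuclideanSpace ℝ ι} (ht : t ∈ blockNormals e) :
    ‖t‖ ≤ √m := by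
  obtain ⟨c, -, rfl⟩ := mem_image.1 ht
  simpa using norm_restrict_le e _ (sum_facetArray_sq_le c.1 c.2.1 c.2.2)

lemma norm_le_of_mem_blockVertices {s : EuclideanSpace ℝ ι} (hs : s ∈ blockVertices e) :
    ‖s‖ ≤ √(k * (1 + Real.log N)) := by
  obtain ⟨⟨σ, row, ε⟩, -, rfl⟩ := mem_image.1 hs
  have hweights : ∑ p, sqrtIncrement (σ p) ^ 2 ≤ 1 + Real.log N := by
    rw [Equiv.sum_comp σ fun i : Fin N => sqrtIncrement i ^ 2,
      Fin.sum_univ_eq_sum_range fun i => sqrtIncrement i ^ 2]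
    exact sum_range_sqrtIncrement_sq_le N
  refine norm_restrict_le e _
    ((sum_vertexArray_sq_le (fun p => sqrtIncrement_nonneg _) row ε).trans ?_)
  rw [Fintype.card_fin]
  gcongr

lemma inner_blockNormal_blockVertex_le_one {s t : EuclideanSpace ℝ ι} (hs : s ∈ blockVertices e)
    (ht : t ∈ blockNormals e) : ⟪t, s⟫ ≤ 1 := by
  obtain ⟨⟨σ, row, ε⟩, -, rfl⟩ := mem_image.1 hs
  obtain ⟨⟨A, col, η⟩, -, rfl⟩ := mem_image.1 ht
  have hweights : ∑ p ∈ A, sqrtIncrement (σ p) ≤ √(#A) :=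
    sum_sqrtIncrement_le (σ.toEmbedding.trans Fin.valEmbedding) A
  rw [inner_restrict]
  refine sum_facetArray_mul_le_one hweights (row := row) (fun p j => ?_) (fun p q j hq => ?_) col η
  · exact (abs_extend_restrict_le e _ _).trans
      (abs_vertexArray_le (fun p => sqrtIncrement_nonneg _) row ε p _ j)
  · refine abs_nonpos_iff.1 ((abs_extend_restrict_le e _ _).trans_eq ?_)
    rw [vertexArray_of_ne hq, abs_zero]

lemma exists_mem_blockVertices_inner_le [NeZero m] [NeZero k] {x : EuclideanSpace ℝ ι}
    (hx : x ∈ oneSidedPolar (blockNormals e : Set (EuclideanSpace ℝ ι)))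
    (y : EuclideanSpace ℝ ι) : ∃ s ∈ blockVertices e, ⟪y, x⟫ ≤ ⟪y, s⟫ := by
  obtain ⟨σ, row, ε, h⟩ := exists_sum_mul_le_sum_vertexArray_mul
    (x := Function.extend e x 0) (fun A col ε => by
      rw [← inner_restrict]
      exact hx _ (mem_image.2 ⟨(A, col, ε), mem_univ _, rfl⟩)) (Function.extend e y 0)
  refine ⟨_, mem_image.2 ⟨(σ, row, ε), mem_univ _, rfl⟩, ?_⟩
  rw [real_inner_comm x, real_inner_comm _ y, ← restrict_extend e x, inner_restrict, inner_restrict]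
  exact h

lemma convexHull_blockVertices [NeZero m] [NeZero k] :
    convexHull ℝ (blockVertices e : Set (EuclideanSpace ℝ ι)) = oneSidedPolar (blockNormals e) :=
  convexHull_eq_oneSidedPolar (fun _ hs _ ht => inner_blockNormal_blockVertex_le_one e hs ht)
    fun _ hx => exists_mem_blockVertices_inner_le e hx

end BlockPolytope

section Counting

lemma logb_natCast_le_logb_natCast {b : ℝ} (hb : 1 < b) {x y : ℕ} (h : x ≤ y) :
    Real.logb b x ≤ Real.logb b y := by
  rcases x.eq_zero_or_pos with rfl | hx
  · rw [Nat.cast_zero, Real.logb_zero, ← Real.log_div_log]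
    exact div_nonneg (Real.log_natCast_nonneg y) (Real.log_nonneg hb.le)
  · exact Real.logb_le_logb_of_le hb (mod_cast hx) (mod_cast h)

lemma logb_natCast_nonneg {b : ℝ} (hb : 1 < b) (x : ℕ) : 0 ≤ Real.logb b x := by
  simpa using logb_natCast_le_logb_natCast hb x.zero_le

lemma logb_two_natCast_le {x n : ℕ} (h : x ≤ n) : Real.logb 2 x ≤ 2 * Real.log n := by
  refine (logb_natCast_le_logb_natCast one_lt_two h).trans ?_
  rw [← Real.log_div_log, div_le_iff₀ (Real.log_pos one_lt_two)]
  calc Real.log n ≤ Real.log n * (2 * Real.log 2) :=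
        le_mul_of_one_le_right (Real.log_natCast_nonneg n) (by linarith [Real.log_two_gt_d9])
    _ = 2 * Real.log n * Real.log 2 := by ring

lemma logb_two_three_le : Real.logb 2 3 ≤ 2 := by
  rw [Real.logb_le_iff_le_rpow one_lt_two three_pos]
  norm_num

variable {ι : Type*} [Fintype ι] {N m k n : ℕ} [NeZero m]
  (e : ι ↪ Fin N × Fin m × Fin k)

lemma logb_card_blockNormals_le [NeZero k] (hk : k ≤ n) :
    Real.logb 2 #(blockNormals e) ≤ 3 * (N * m * (1 + Real.log n)) := by
  have hm : (1 : ℝ) ≤ m := mod_cast NeZero.one_le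
  calc Real.logb 2 #(blockNormals e)
      ≤ Real.logb 2 (2 ^ N * ((k ^ m) ^ N * (3 ^ m) ^ N) : ℕ) :=
        logb_natCast_le_logb_natCast one_lt_two (card_blockNormals_le e)
    _ = N + N * m * (Real.logb 2 k + Real.logb 2 3) := by
        push_cast
        rw [Real.logb_mul (by positivity) (by simp [NeZero.ne]), Real.logb_mul (by simp [NeZero.ne])
          (by positivity)]
        simp only [Real.logb_pow, Real.logb_self_eq_one one_lt_two]
        ring
    _ ≤ N * m + N * m * (2 * Real.log n + 2) := by
        gcongr
        · exact le_mul_of_one_le_right (Nat.cast_nonneg N) hm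
        · exact logb_two_natCast_le hk
        · exact logb_two_three_le
    _ ≤ 3 * (N * m * (1 + Real.log n)) := by
        have : 0 ≤ N * m * Real.log n := by positivity
        linarith

lemma logb_card_blockVertices_le (hN : N ≤ n) (hm : m ≤ n) :
    Real.logb 2 #(blockVertices e) ≤ 4 * (N * (1 + Real.log n)) + 2 * (N * k) :=
  calc Real.logb 2 #(blockVertices e)
      ≤ Real.logb 2 (N.factorial * (m ^ N * (3 ^ k) ^ N) : ℕ) :=
        logb_natCast_le_logb_natCast one_lt_two (card_blockVertices_le e)
    _ = Real.logb 2 N.factorial + N * Real.logb 2 m + N * k * Real.logb 2 3 := by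
        push_cast
        rw [Real.logb_mul (by positivity) (by simp [NeZero.ne]), Real.logb_mul (by simp [NeZero.ne])
          (by positivity)]
        simp only [Real.logb_pow]
        ring
    _ ≤ N * Real.logb 2 N + N * Real.logb 2 m + N * k * Real.logb 2 3 := by
        gcongr
        rw [← Real.logb_pow, ← Nat.cast_pow]
        exact logb_natCast_le_logb_natCast one_lt_two N.factorial_le_pow
    _ ≤ N * (2 * Real.log n) + N * (2 * Real.log n) + N * k * 2 := by
        gcongr
        · exact logb_two_natCast_le hN
        · exact logb_two_natCast_le hm
        · exact logb_two_three_le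
    _ ≤ 4 * (N * (1 + Real.log n)) + 2 * (N * k) := by
        linarith [(Nat.cast_nonneg N : (0 : ℝ) ≤ N)]

end Counting

section PolytopeBounds

/-- The polytope spanned by `S` has at most `2 ^ f` facets and `2 ^ v` vertices, and lies between
two concentric balls around the origin whose squared ratio of radii is at most `ρ`. -/
structure PolytopeBounds {E : Type*} [NormedAddCommGroup E] [NormedSpace ℝ E] (S : Finset E)
    (f v ρ : ℝ) : Prop where
  finite_facets : (facets (convexHull ℝ (S : Set E))).Finite
  logb_facets_le : Real.logb 2 (facets (convexHull ℝ (S : Set E))).ncard ≤ f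
  logb_vertices_le : Real.logb 2 ((convexHull ℝ (S : Set E)).extremePoints ℝ).ncard ≤ v
  exists_radii : ∃ r R : ℝ, 0 < r ∧ Metric.closedBall 0 r ⊆ convexHull ℝ (S : Set E) ∧
    convexHull ℝ (S : Set E) ⊆ Metric.closedBall 0 R ∧ (R / r) ^ 2 ≤ ρ

lemma PolytopeBounds.mono {E : Type*} [NormedAddCommGroup E] [NormedSpace ℝ E] {S : Finset E}
    {f v ρ f' v' ρ' : ℝ} (h : PolytopeBounds S f v ρ) (hf : f ≤ f') (hv : v ≤ v') (hρ : ρ ≤ ρ') :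
    PolytopeBounds S f' v' ρ' where
  finite_facets := h.finite_facets
  logb_facets_le := h.logb_facets_le.trans hf
  logb_vertices_le := h.logb_vertices_le.trans hv
  exists_radii := by
    obtain ⟨r, R, hr, hrS, hSR, hle⟩ := h.exists_radii
    exact ⟨r, R, hr, hrS, hSR, hle.trans hρ⟩

lemma polytopeBounds_blockVertices {ι : Type*} [Fintype ι] {N m k n : ℕ} [NeZero m] [NeZero k]
    (e : ι ↪ Fin N × Fin m × Fin k) (hι : 1 < Fintype.card ι) (hN : N ≤ n) (hm : m ≤ n)
    (hk : k ≤ n) :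
    PolytopeBounds (blockVertices e) (3 * (N * m * (1 + Real.log n)))
      (4 * (N * (1 + Real.log n)) + 2 * (N * k)) (m * k * (1 + Real.log n)) := by
  have hdim : 1 < finrank ℝ (EuclideanSpace ℝ ι) := by rwa [finrank_euclideanSpace]
  have hpolar := convexHull_blockVertices e
  have hm₀ : (0 : ℝ) < m := mod_cast NeZero.pos m
  obtain ⟨i⟩ : Nonempty ι := Fintype.card_pos_iff.1 (zero_lt_one.trans hι)
  have hN₀ : (0 : ℝ) < N := mod_cast (e i).1.pos
  refine ⟨?_, ?_, ?_, (√m)⁻¹, √(k * (1 + Real.log N)), by positivity, ?_, ?_, ?_⟩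
  · rw [hpolar]
    exact finite_facets_oneSidedPolar hdim _
  · rw [hpolar]
    exact (logb_natCast_le_logb_natCast one_lt_two (ncard_facets_oneSidedPolar_le hdim _)).trans
      (logb_card_blockNormals_le e hk)
  · exact (logb_natCast_le_logb_natCast one_lt_two (ncard_extremePoints_convexHull_le _)).trans
      (logb_card_blockVertices_le e hN hm)
  · rw [hpolar]
    exact closedBall_subset_oneSidedPolar (by positivity) fun t => norm_le_of_mem_blockNormals e
  · exact convexHull_min (fun s hs => mem_closedBall_zero_iff.2 (norm_le_of_mem_blockVertices e hs))
      (convex_closedBall _ _)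
  · rw [div_inv_eq_mul, mul_pow, Real.sq_sqrt (by positivity), Real.sq_sqrt hm₀.le, mul_comm,
      ← mul_assoc]
    gcongr

end PolytopeBounds

section Parameters

lemma one_add_log_le_mul_rpow {x η : ℝ} (hx : 1 ≤ x) (hη : 0 < η) :
    1 + Real.log x ≤ (1 + 1 / η) * x ^ η := by
  have hlog := Real.log_le_rpow_div (zero_le_one.trans hx) hη
  have hone := Real.one_le_rpow hx hη.le
  calc 1 + Real.log x ≤ x ^ η + x ^ η / η := add_le_add hone hlog
    _ = (1 + 1 / η) * x ^ η := by ring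

lemma one_add_log_le_two_mul_rpow_div_sqrt_log {x C : ℝ} (hx : 1 < x) (hC : 1 ≤ C) :
    1 + Real.log x ≤ 2 * x ^ (C / √(Real.log x)) := by
  have hlog := Real.log_pos hx
  have hexp : Real.log x * (C / √(Real.log x)) = C * √(Real.log x) := by
    rw [mul_div_left_comm, Real.div_sqrt]
  calc 1 + Real.log x ≤ 2 * (1 + √(Real.log x) + √(Real.log x) ^ 2 / 2) := by
        rw [Real.sq_sqrt hlog.le]
        linarith [Real.sqrt_nonneg (Real.log x)]
    _ ≤ 2 * Real.exp (√(Real.log x)) := by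
        gcongr
        exact Real.quadratic_le_exp_of_nonneg (Real.sqrt_nonneg _)
    _ ≤ 2 * x ^ (C / √(Real.log x)) := by
        rw [Real.rpow_def_of_pos (zero_lt_one.trans hx), hexp]
        gcongr
        exact le_mul_of_one_le_left (Real.sqrt_nonneg _) hC

lemma exists_nat_mul_one_add_log_mem_Icc {γ : ℝ} (hγ : 0 < γ) (hγ₁ : γ ≤ 1) {n : ℕ} (hn : n ≠ 0) :
    ∃ m : ℕ, 0 < m ∧ m ≤ n ∧
      m * (1 + Real.log n) ∈ Set.Icc ((n : ℝ) ^ γ) ((2 + 1 / γ) * (n : ℝ) ^ γ) := by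
  have hn₁ : (1 : ℝ) ≤ n := mod_cast Nat.one_le_iff_ne_zero.2 hn
  have hL : 1 ≤ 1 + Real.log n := le_add_of_nonneg_right (Real.log_natCast_nonneg n)
  have hL₀ : 0 < 1 + Real.log n := zero_lt_one.trans_le hL
  refine ⟨⌈(n : ℝ) ^ γ / (1 + Real.log n)⌉₊, Nat.ceil_pos.2 (by positivity), Nat.ceil_le.2 ?_,
    (div_le_iff₀ hL₀).1 (Nat.le_ceil _), ?_⟩
  · exact (div_le_self (by positivity) hL).trans (Real.rpow_le_self_of_one_le hn₁ hγ₁)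
  · calc ⌈(n : ℝ) ^ γ / (1 + Real.log n)⌉₊ * (1 + Real.log n)
        ≤ ((n : ℝ) ^ γ / (1 + Real.log n) + 1) * (1 + Real.log n) := by
          gcongr
          exact (Nat.ceil_lt_add_one (by positivity)).le
      _ = n ^ γ + (1 + Real.log n) := by field_simp
      _ ≤ n ^ γ + (1 + 1 / γ) * n ^ γ := by gcongr; exact one_add_log_le_mul_rpow hn₁ hγ
      _ = (2 + 1 / γ) * n ^ γ := by ring

/-- The width `k` is the least for which `N` blocks of height `m` provide `n` coordinates. -/
lemma exists_block_sizes {β γ a : ℝ} (hβ : 0 ≤ β) (hγ : 0 < γ) (ha : 0 ≤ a) (hsum : β + γ + a = 1)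
    {n : ℕ} (hn : n ≠ 0) :
    ∃ N m k : ℕ, 0 < m ∧ 0 < k ∧ n ≤ N * (m * k) ∧ N ≤ n ∧ m ≤ n ∧ k ≤ n ∧
      N ≤ 2 * (n : ℝ) ^ β ∧ m * (1 + Real.log n) ≤ (2 + 1 / γ) * (n : ℝ) ^ γ ∧
      k ≤ 2 * ((n : ℝ) ^ a * (1 + Real.log n)) := by
  obtain ⟨m, hm, hmn, hmL, hmL'⟩ := exists_nat_mul_one_add_log_mem_Icc hγ (by linarith) hn
  have hn₁ : (1 : ℝ) ≤ n := mod_cast Nat.one_le_iff_ne_zero.2 hn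
  have hn₀ : (0 : ℝ) < n := zero_lt_one.trans_le hn₁
  have hL : 1 ≤ 1 + Real.log n := le_add_of_nonneg_right (Real.log_natCast_nonneg n)
  set N := ⌈(n : ℝ) ^ β⌉₊
  set k := ⌈(n : ℝ) / (N * m : ℕ)⌉₊
  have hN : 0 < N := Nat.ceil_pos.2 (by positivity)
  have hNm : 0 < N * m := mul_pos hN hm
  refine ⟨N, m, k, hm, Nat.ceil_pos.2 (by positivity), ?_, ?_, hmn, ?_, ?_, hmL', ?_⟩
  · rw [← mul_assoc]
    exact_mod_cast (div_le_iff₀' (by positivity)).1 (Nat.le_ceil ((n : ℝ) / (N * m : ℕ)))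
  · exact Nat.ceil_le.2 (Real.rpow_le_self_of_one_le hn₁ (by linarith))
  · exact Nat.ceil_le.2 (div_le_self hn₀.le (mod_cast hNm))
  · exact Nat.ceil_le_two_mul (by linarith [Real.one_le_rpow hn₁ hβ])
  · have hwidth : (n : ℝ) / (N * m : ℕ) ≤ n ^ a * (1 + Real.log n) := by
      rw [div_le_iff₀ (by positivity), Nat.cast_mul]
      calc (n : ℝ) = n ^ a * (n ^ β * n ^ γ) := by
            rw [← Real.rpow_add hn₀, ← Real.rpow_add hn₀, add_comm, hsum, Real.rpow_one]
        _ ≤ n ^ a * (N * (m * (1 + Real.log n))) := by gcongr; exact Nat.le_ceil _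
        _ = n ^ a * (1 + Real.log n) * (N * m) := by ring
    have hone := one_le_mul_of_one_le_of_one_le (Real.one_le_rpow hn₁ ha) hL
    calc (k : ℝ) ≤ ⌈(n : ℝ) ^ a * (1 + Real.log n)⌉₊ := Nat.cast_le.2 (Nat.ceil_mono hwidth)
      _ ≤ 2 * (n ^ a * (1 + Real.log n)) := Nat.ceil_le_two_mul (by linarith)

lemma exists_polytopeBounds_log {β γ a : ℝ} (hβ : 0 ≤ β) (hγ : 0 < γ) (ha : 0 ≤ a)
    (hsum : β + γ + a = 1) :
    ∃ K : ℝ, 1 ≤ K ∧ ∀ n : ℕ, 2 ≤ n → ∃ S : Finset (EuclideanSpace ℝ (Fin n)),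
      PolytopeBounds S (K * (n : ℝ) ^ (β + γ)) (K * (n ^ (β + a) * (1 + Real.log n)))
        (K * (n ^ (γ + a) * (1 + Real.log n))) := by
  refine ⟨8 * (2 + 1 / γ), ?_, fun n hn => ?_⟩
  · linarith [one_div_pos.2 hγ]
  obtain ⟨N, m, k, hm, hk, hcard, hNn, hmn, hkn, hN, hmL, hkL⟩ :=
    exists_block_sizes hβ hγ ha hsum (n := n) (by lia)
  have : NeZero m := ⟨hm.ne'⟩
  have : NeZero k := ⟨hk.ne'⟩
  have hn₀ : (0 : ℝ) < n := by positivity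
  obtain ⟨e⟩ : Nonempty (Fin n ↪ Fin N × Fin m × Fin k) :=
    Function.Embedding.nonempty_of_card_le (by simpa using hcard)
  have hγ' : 0 < 1 / γ := one_div_pos.2 hγ
  have hdim : 1 < Fintype.card (Fin n) := hn.trans_eq (Fintype.card_fin n).symm
  refine ⟨_, (polytopeBounds_blockVertices e hdim hNn hmn hkn).mono ?_ ?_ ?_⟩
  · calc 3 * (N * m * (1 + Real.log n)) = 3 * (N * (m * (1 + Real.log n))) := by ring
      _ ≤ 3 * (2 * (n : ℝ) ^ β * ((2 + 1 / γ) * n ^ γ)) := by gcongr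
      _ = 6 * (2 + 1 / γ) * n ^ (β + γ) := by rw [Real.rpow_add hn₀]; ring
      _ ≤ 8 * (2 + 1 / γ) * n ^ (β + γ) := by gcongr; norm_num
  · have hLa : 1 + Real.log n ≤ (n : ℝ) ^ a * (1 + Real.log n) :=
      le_mul_of_one_le_left (by positivity) (Real.one_le_rpow (mod_cast hn₀) ha)
    calc 4 * (N * (1 + Real.log n)) + 2 * (N * k)
        ≤ 4 * (2 * (n : ℝ) ^ β * (n ^ a * (1 + Real.log n))) +
          2 * (2 * n ^ β * (2 * (n ^ a * (1 + Real.log n)))) := by gcongr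
      _ = 8 * 2 * (n ^ (β + a) * (1 + Real.log n)) := by rw [Real.rpow_add hn₀]; ring
      _ ≤ 8 * (2 + 1 / γ) * (n ^ (β + a) * (1 + Real.log n)) := by gcongr; linarith
  · calc m * k * (1 + Real.log n) = m * (1 + Real.log n) * k := by ring
      _ ≤ (2 + 1 / γ) * (n : ℝ) ^ γ * (2 * ((n : ℝ) ^ a * (1 + Real.log n))) := by gcongr
      _ = 2 * (2 + 1 / γ) * (n ^ (γ + a) * (1 + Real.log n)) := by rw [Real.rpow_add hn₀]; ring
      _ ≤ 8 * (2 + 1 / γ) * (n ^ (γ + a) * (1 + Real.log n)) := by gcongr; norm_num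

lemma exists_polytopeBounds_rpow {a δ : ℝ} (ha : a ∈ Set.Ioo (0 : ℝ) 1)
    (hδ : δ ∈ Set.Ico (0 : ℝ) 1) :
    ∃ C : ℝ, 0 < C ∧ ∀ n : ℕ, 2 ≤ n → ∃ S : Finset (EuclideanSpace ℝ (Fin n)),
      PolytopeBounds S (C * (n : ℝ) ^ (1 - a))
        (C * n ^ (a + δ * (1 - a) + C / √(Real.log n))) (C * n ^ (1 - δ + a)) := by
  obtain ⟨ha₀, ha₁⟩ := ha
  obtain ⟨hδ₀, hδ₁⟩ := hδ
  obtain ⟨K, hK, h⟩ := exists_polytopeBounds_log (β := δ * (1 - a)) (γ := (1 - δ) * (1 - a))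
    (a := a) (by nlinarith) (by nlinarith) ha₀.le (by ring)
  set η := a * (1 - δ)
  have hη : 0 < η := mul_pos ha₀ (sub_pos.2 hδ₁)
  have hη' : 0 < 1 / η := one_div_pos.2 hη
  have hC : 1 ≤ K * (2 + 1 / η) := one_le_mul_of_one_le_of_one_le hK (by linarith)
  refine ⟨K * (2 + 1 / η), by positivity, fun n hn => (h n hn).imp fun S hS => hS.mono ?_ ?_ ?_⟩
  all_goals
    have hn₁ : (1 : ℝ) < n := mod_cast hn
    have hn₀ : (0 : ℝ) < n := zero_lt_one.trans hn₁
  · calc K * (n : ℝ) ^ (δ * (1 - a) + (1 - δ) * (1 - a)) = K * n ^ (1 - a) := by ring_nf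
      _ ≤ K * (2 + 1 / η) * n ^ (1 - a) := by
        gcongr
        exact le_mul_of_one_le_right (by positivity) (by linarith)
  · set E := K * (2 + 1 / η) / √(Real.log n)
    calc K * (n ^ (δ * (1 - a) + a) * (1 + Real.log n))
        ≤ K * (n ^ (δ * (1 - a) + a) * ((2 + 1 / η) * n ^ E)) := by
          gcongr
          refine (one_add_log_le_two_mul_rpow_div_sqrt_log hn₁ hC).trans ?_
          gcongr
          linarith
      _ = K * (2 + 1 / η) * n ^ (a + δ * (1 - a) + E) := by
          rw [add_comm a, Real.rpow_add hn₀ _ E]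
          ring
  · calc K * ((n : ℝ) ^ ((1 - δ) * (1 - a) + a) * (1 + Real.log n))
        ≤ K * (n ^ ((1 - δ) * (1 - a) + a) * ((2 + 1 / η) * n ^ η)) := by
          gcongr
          refine (one_add_log_le_mul_rpow hn₁.le hη).trans ?_
          gcongr
          norm_num
      _ = K * (2 + 1 / η) * n ^ (1 - δ + a) := by
          rw [(by ring : 1 - δ + a = (1 - δ) * (1 - a) + a + η), Real.rpow_add hn₀ _ η]
          ring

end Parameters

end FLM

theorem flm_near_saturation_irrational_general (a : ℝ) (ha : a ∈ Set.Ioo (0 : ℝ) 1)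
    (δ : ℝ) (hδ : δ ∈ Set.Ico (0 : ℝ) 1) :
    ∃ C : ℝ, 0 < C ∧ ∀ n : ℕ, 2 ≤ n →
      ∃ (S : Finset (EuclideanSpace ℝ (Fin n))) (P : Set (EuclideanSpace ℝ (Fin n)))
        (V : Set (EuclideanSpace ℝ (Fin n))) (Fs : Set (Set (EuclideanSpace ℝ (Fin n))))
        (r R : ℝ),
        P = convexHull ℝ (S : Set (EuclideanSpace ℝ (Fin n))) ∧
        (0 : EuclideanSpace ℝ (Fin n)) ∈ interior P ∧
        V = Set.extremePoints ℝ P ∧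
        Fs = {G : Set (EuclideanSpace ℝ (Fin n)) |
          IsExposed ℝ P G ∧ Module.finrank ℝ (affineSpan ℝ G).direction = n - 1} ∧
        0 < r ∧ Metric.closedBall 0 r ⊆ P ∧ P ⊆ Metric.closedBall 0 R ∧
        V.Finite ∧ Fs.Finite ∧
        Real.logb 2 (Fs.ncard) ≤ C * (n : ℝ) ^ (1 - a) ∧
        Real.logb 2 (V.ncard) ≤
          C * (n : ℝ) ^ (a + δ * (1 - a) + C / Real.sqrt (Real.log n)) ∧
        (R / r) ^ 2 ≤ C * (n : ℝ) ^ (1 - δ + a) ∧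
        Real.logb 2 (V.ncard) * Real.logb 2 (Fs.ncard) * (R / r) ^ 2 ≤
          C ^ 3 * (n : ℝ) ^ (2 + a * (1 - δ) + C / Real.sqrt (Real.log n)) := by
  obtain ⟨C, hC, h⟩ := FLM.exists_polytopeBounds_rpow ha hδ
  refine ⟨C, hC, fun n hn => ?_⟩
  obtain ⟨S, hfin, hF, hV, r, R, hr, hrS, hSR, hρ⟩ := h n hn
  refine ⟨S, _, _, FLM.facets (convexHull ℝ (S : Set (EuclideanSpace ℝ (Fin n)))), r, R, rfl,
    interior_mono hrS (Metric.ball_subset_interior_closedBall (Metric.mem_ball_self hr)), rfl,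
    by simp only [FLM.facets, finrank_euclideanSpace_fin], hr, hrS, hSR,
    S.finite_toSet.subset extremePoints_convexHull_subset, hfin, hF, hV, hρ, ?_⟩
  have hn₀ : (0 : ℝ) < n := by positivity
  calc _ ≤ C * (n : ℝ) ^ (a + δ * (1 - a) + C / √(Real.log n)) * (C * n ^ (1 - a)) *
        (C * n ^ (1 - δ + a)) := by
        gcongr
        exact FLM.logb_natCast_nonneg one_lt_two _
    _ = C ^ 3 * (n ^ (a + δ * (1 - a) + C / √(Real.log n)) * n ^ (1 - a) * n ^ (1 - δ + a)) := by
        ring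
    _ = C ^ 3 * n ^ (2 + a * (1 - δ) + C / √(Real.log n)) := by
        rw [← Real.rpow_add hn₀, ← Real.rpow_add hn₀]
        ring_nf

/-- **Theorem 1.3, part 2.** Let `a ∈ (0,1)` be irrational and `δ ∈ (0,1)`. There is a
constant `C > 0` depending only on `a` and `δ`, and for every `n ≥ 2` a polytope
`P_n ⊂ ℝ^n` (the convex hull of a finite set, with the origin in its interior, with
vertex set `V`, facet set `ℱ` -- the exposed faces whose affine span has dimension
`n-1` -- and with `r·B₂ⁿ ⊆ P_n ⊆ R·B₂ⁿ`), such that `log₂|ℱ| ≤ C·n^{1-a}`,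
`log₂|V| ≤ C·n^{a+δ(1-a)+C/√(log n)}` and `(R/r)² ≤ C·n^{1-δ+a}`; consequently
`log₂|V| · log₂|ℱ| · (R/r)² ≤ C³·n^{2+a(1-δ)+C/√(log n)}`. -/
theorem flm_near_saturation_irrational (a : ℝ) (ha : a ∈ Set.Ioo (0 : ℝ) 1)
    (hirr : Irrational a) (δ : ℝ) (hδ : δ ∈ Set.Ioo (0 : ℝ) 1) :
    ∃ C : ℝ, 0 < C ∧ ∀ n : ℕ, 2 ≤ n →
      ∃ (S : Finset (EuclideanSpace ℝ (Fin n))) (P : Set (EuclideanSpace ℝ (Fin n)))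
        (V : Set (EuclideanSpace ℝ (Fin n))) (Fs : Set (Set (EuclideanSpace ℝ (Fin n))))
        (r R : ℝ),
        P = convexHull ℝ (S : Set (EuclideanSpace ℝ (Fin n))) ∧
        (0 : EuclideanSpace ℝ (Fin n)) ∈ interior P ∧
        V = Set.extremePoints ℝ P ∧
        Fs = {G : Set (EuclideanSpace ℝ (Fin n)) |
          IsExposed ℝ P G ∧ Module.finrank ℝ (affineSpan ℝ G).direction = n - 1} ∧
        0 < r ∧ Metric.closedBall 0 r ⊆ P ∧ P ⊆ Metric.closedBall 0 R ∧
        V.Finite ∧ Fs.Finite ∧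
        Real.logb 2 (Fs.ncard) ≤ C * (n : ℝ) ^ (1 - a) ∧
        Real.logb 2 (V.ncard) ≤
          C * (n : ℝ) ^ (a + δ * (1 - a) + C / Real.sqrt (Real.log n)) ∧
        (R / r) ^ 2 ≤ C * (n : ℝ) ^ (1 - δ + a) ∧
        Real.logb 2 (V.ncard) * Real.logb 2 (Fs.ncard) * (R / r) ^ 2 ≤
          C ^ 3 * (n : ℝ) ^ (2 + a * (1 - δ) + C / Real.sqrt (Real.log n)) :=
  flm_near_saturation_irrational_general a ha δ ⟨hδ.1.le, hδ.2⟩
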